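/- Sharkovsky's theorem: (1) If f : [0,1] → [0,1] is continuous, m ≻ n in the Sharkovsky ordering, and f has a periodic point of least period m, then f has a periodic point of least period n. (2) For every continuous f : [0,1] → [0,1] there exists k ∈ ℕ ∪ {2^∞} such that Per(f) = Sh(k). (3) Conversely, for every k ∈ ℕ ∪ {2^∞} there exists a continuous map f : [0,1] → [0,1] with Per(f) = Sh(k). -/

import Mathlib

open Set

noncomputable section

/-- The strict Sharkovsky ordering `m ≻ n` on positive integers: writing
`m = 2^a·b` and `n = 2^c·d` with `b, d` odd, either both are not powers of two
and `(a, b) < (c, d)` lexicographically, or `m` is not a power of two while `n`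
is, or both are powers of two and `m > n`. -/
def SharkGT (m n : ℕ) : Prop :=
  ∃ a b c d : ℕ, Odd b ∧ Odd d ∧ m = 2 ^ a * b ∧ n = 2 ^ c * d ∧
    ((1 < b ∧ 1 < d ∧ (a < c ∨ (a = c ∧ b < d))) ∨
     (1 < b ∧ d = 1) ∨
     (b = 1 ∧ d = 1 ∧ c < a))

/-- `Sh(k)` for `k ∈ ℕ ∪ {2^∞}` (with `none` playing the role of `2^∞`):
for `k ∈ ℕ` it is the set of all `m` with `k ≻ m` together with `k` itself,
and `Sh(2^∞)` is the set of all powers of `2`. -/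
def ShSet : Option ℕ → Set ℕ
  | some k => insert k {m | SharkGT k m}
  | none => {m | ∃ j : ℕ, m = 2 ^ j}

/-- `Per(f)`: the set of least periods of periodic points of `f : [0,1] → [0,1]`. -/
def PerSet (f : ℝ → ℝ) : Set ℕ :=
  {n | 0 < n ∧ ∃ x ∈ Set.Icc (0 : ℝ) 1,
    f^[n] x = x ∧ ∀ j : ℕ, 0 < j → j < n → f^[j] x ≠ x}

section helpers
open Function

/-- `f` has a periodic point of least period `n > 0`. -/
def HasPer (f : ℝ → ℝ) (n : ℕ) : Prop := 0 < n ∧ ∃ x, minimalPeriod f x = n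

lemma it_succ (f : ℝ → ℝ) (n : ℕ) (x : ℝ) : f^[n + 1] x = f (f^[n] x) :=
  iterate_succ_apply' f n x

lemma hasPer_of {f : ℝ → ℝ} {n : ℕ} {x : ℝ} (hn : 0 < n) (h : f^[n] x = x)
    (h' : ∀ j, 0 < j → j < n → f^[j] x ≠ x) : minimalPeriod f x = n := by
  have h1 : IsPeriodicPt f n x := h
  have h2 := h1.minimalPeriod_le hn
  have h3 := h1.minimalPeriod_pos hn
  rcases h2.lt_or_eq with h4 | h4
  · exact absurd (iterate_minimalPeriod (f := f) (x := x)) (h' _ h3 h4)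
  · exact h4

/-- two-sided intermediate value: `g` crosses the identity. -/
lemma ivt_fix {g : ℝ → ℝ} (hg : Continuous g) {p q : ℝ} (hp : g p ≤ p) (hq : q ≤ g q) :
    ∃ x ∈ uIcc p q, g x = x := by
  have h : (0:ℝ) ∈ uIcc (g p - p) (g q - q) := by
    rw [mem_uIcc]; left; constructor <;> linarith
  obtain ⟨x, hx, h2⟩ := intermediate_value_uIcc (f := fun x => g x - x) (a := p) (b := q)
    (by fun_prop) h
  exact ⟨x, hx, by simpa [sub_eq_zero] using h2⟩

lemma ivt_val {g : ℝ → ℝ} (hg : Continuous g) {p q c : ℝ} (hp : g p ≤ c) (hq : c ≤ g q) :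
    ∃ x ∈ uIcc p q, g x = c := by
  obtain ⟨x, hx, h2⟩ := intermediate_value_uIcc (f := g) (a := p) (b := q)
    hg.continuousOn (show c ∈ uIcc (g p) (g q) by rw [mem_uIcc]; exact Or.inl ⟨hp, hq⟩)
  exact ⟨x, hx, h2⟩

lemma exists_max_of {g : ℝ → ℝ} (hg : Continuous g) {p q c : ℝ}
    (h : ∃ x ∈ Icc p q, g x = c) :
    ∃ x ∈ Icc p q, g x = c ∧ ∀ y ∈ Icc p q, g y = c → y ≤ x := by
  have hc : IsCompact (Icc p q ∩ {x | g x = c}) :=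
    isCompact_Icc.inter_right (isClosed_eq hg continuous_const)
  obtain ⟨x, hx⟩ := hc.exists_isGreatest (by obtain ⟨x, h1, h2⟩ := h; exact ⟨x, h1, h2⟩)
  exact ⟨x, hx.1.1, hx.1.2, fun y h1 h2 => hx.2 ⟨h1, h2⟩⟩

lemma exists_min_of {g : ℝ → ℝ} (hg : Continuous g) {p q c : ℝ}
    (h : ∃ x ∈ Icc p q, g x = c) :
    ∃ x ∈ Icc p q, g x = c ∧ ∀ y ∈ Icc p q, g y = c → x ≤ y := by
  have hc : IsCompact (Icc p q ∩ {x | g x = c}) :=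
    isCompact_Icc.inter_right (isClosed_eq hg continuous_const)
  obtain ⟨x, hx⟩ := hc.exists_isLeast (by obtain ⟨x, h1, h2⟩ := h; exact ⟨x, h1, h2⟩)
  exact ⟨x, hx.1.1, hx.1.2, fun y h1 h2 => hx.2 ⟨h1, h2⟩⟩

lemma cover_aux {g : ℝ → ℝ} (hg : Continuous g) {p q r s : ℝ} (hpq : p ≤ q) (hrs : r ≤ s)
    (hp : g p ≤ r) (hq : s ≤ g q) :
    ∃ p' q', p ≤ p' ∧ p' ≤ q' ∧ q' ≤ q ∧ g p' = r ∧ g q' = s ∧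
      ∀ x ∈ Icc p' q', g x ∈ Icc r s := by
  obtain ⟨p', hp1, hp2, hp3⟩ := exists_max_of hg (p := p) (q := q) (c := r) (by
    obtain ⟨x, h1, h2⟩ := ivt_val hg hp (hrs.trans hq)
    rw [uIcc_of_le hpq] at h1; exact ⟨x, h1, h2⟩)
  obtain ⟨q', hq1, hq2, hq3⟩ := exists_min_of hg (p := p') (q := q) (c := s) (by
    obtain ⟨x, h1, h2⟩ := ivt_val hg (p := p') (q := q) (hp2.le.trans hrs) hq
    rw [uIcc_of_le hp1.2] at h1; exact ⟨x, h1, h2⟩)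
  refine ⟨p', q', hp1.1, hq1.1, hq1.2, hp2, hq2, fun x hx => ⟨?_, ?_⟩⟩
  · by_contra! hlt
    obtain ⟨w, h1, h2⟩ := ivt_val hg (p := x) (q := q') hlt.le (hrs.trans hq2.ge)
    rw [uIcc_of_le hx.2] at h1
    have := hp3 w ⟨by linarith [h1.1, hx.1, hp1.1], by linarith [h1.2, hq1.2]⟩ h2
    have hxp : x = p' := by linarith [h1.1, hx.1]
    rw [hxp, hp2] at hlt; exact lt_irrefl _ hlt
  · by_contra! hlt
    obtain ⟨w, h1, h2⟩ := ivt_val hg (p := p') (q := x) (hp2.le.trans hrs) hlt.le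
    rw [uIcc_of_le hx.1] at h1
    have := hq3 w ⟨by linarith [h1.1], by linarith [h1.2, hx.2, hq1.2]⟩ h2
    have hxp : x = q' := by linarith [h1.2, hx.2]
    rw [hxp, hq2] at hlt; exact lt_irrefl _ hlt

lemma cover {g : ℝ → ℝ} (hg : Continuous g) {p q r s : ℝ} (hrs : r ≤ s)
    (hp : g p ≤ r) (hq : s ≤ g q) :
    ∃ p' ∈ uIcc p q, ∃ q' ∈ uIcc p q, g p' = r ∧ g q' = s ∧
      ∀ x ∈ uIcc p' q', g x ∈ Icc r s := by
  rcases le_total p q with h | h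
  · obtain ⟨p', q', h1, h2, h3, h4, h5, h6⟩ := cover_aux hg h hrs hp hq
    refine ⟨p', ?_, q', ?_, h4, h5, ?_⟩
    · rw [uIcc_of_le h]; exact ⟨h1, h2.trans h3⟩
    · rw [uIcc_of_le h]; exact ⟨h1.trans h2, h3⟩
    · rw [uIcc_of_le h2]; exact h6
  · obtain ⟨p', q', h1, h2, h3, h4, h5, h6⟩ := cover_aux (g := fun x => g (-x))
      (p := -p) (q := -q) (by fun_prop) (by linarith) hrs (by simpa using hp) (by simpa using hq)
    refine ⟨-p', ?_, -q', ?_, h4, h5, ?_⟩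
    · rw [uIcc_of_ge h]; constructor <;> linarith
    · rw [uIcc_of_ge h]; constructor <;> linarith
    · rw [uIcc_of_ge (by linarith)]
      intro x hx
      simpa using h6 (-x) ⟨by linarith [hx.2], by linarith [hx.1]⟩

/-- The basic configuration extracted from a cycle of length at least three. -/
lemma setup {f : ℝ → ℝ} (hf : Continuous f) {m : ℕ} (hm : 3 ≤ m) (h : HasPer f m) :
    ∃ a v z : ℝ, a < v ∧ v < z ∧ f z = z ∧ z < f v ∧ f (f v) = a ∧ a < f (f a) ∧
      f^[m] a = a ∧ (∀ i, a ≤ f^[i] a) ∧ f^[m-1] a = f v := by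
  obtain ⟨_, x, hx⟩ := h
  obtain ⟨i, hi, hmin⟩ := Finset.exists_min_image (Finset.range m) (fun i => f^[i] x)
    ⟨0, by simp; omega⟩
  have hxp : x ∈ periodicPts f := by
    rw [← minimalPeriod_pos_iff_mem_periodicPts]; omega
  set a := f^[i] x with ha
  have hap : minimalPeriod f a = m := by rw [ha, minimalPeriod_apply_iterate hxp, hx]
  have hma : f^[m] a = a := by rw [← hap]; exact iterate_minimalPeriod
  have hle : ∀ j, a ≤ f^[j] a := by
    intro j
    have : f^[j] a = f^[(j + i) % m] x := by
      rw [ha, ← iterate_add_apply, ← hx, iterate_mod_minimalPeriod_eq]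
    rw [this]
    exact hmin _ (by simp; exact Nat.mod_lt _ (by omega))
  have hne : ∀ j, 0 < j → j < m → f^[j] a ≠ a := by
    intro j h0 h1 h2
    have : IsPeriodicPt f j a := h2
    have := this.minimalPeriod_le h0
    omega
  set b := f^[m-1] a with hb
  have hfb : f b = a := by
    rw [hb, ← iterate_succ_apply' f, show (m-1).succ = m by omega, hma]
  have hab : a < b := lt_of_le_of_ne (hle _) (hne _ (by omega) (by omega)).symm
  have hu : ∃ i, f^[i] a ≤ b ∧ b ≤ f (f^[i] a) := by
    by_contra! hcon
    have : ∀ i, f^[i] a < b := by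
      intro i
      induction i with
      | zero => simpa using hab
      | succ k ih => rw [it_succ]; exact hcon k ih.le
    exact lt_irrefl _ (this (m-1))
  obtain ⟨j, hj1, hj2⟩ := hu
  obtain ⟨v, hv1, hv2⟩ := ivt_val hf (p := b) (q := f^[j] a) (hfb.le.trans hab.le) hj2
  rw [uIcc_of_ge hj1] at hv1
  have hvb : v < b := lt_of_le_of_ne hv1.2 (by
    rintro rfl; rw [hfb] at hv2; linarith)
  have haa : a < f (f a) := lt_of_le_of_ne (hle 2) (hne 2 (by omega) (by omega)).symm
  have hav : a < v := lt_of_le_of_ne ((hle j).trans hv1.1) (by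
    intro h; rw [← h] at hv2; rw [hv2, hfb] at haa; exact lt_irrefl _ haa)
  obtain ⟨z, hz1, hz2⟩ := ivt_fix hf (p := b) (q := v) (by linarith) (by linarith)
  rw [uIcc_of_ge hvb.le] at hz1
  refine ⟨a, v, z, hav, lt_of_le_of_ne hz1.1 ?_, hz2, ?_, by rw [hv2, hfb], haa, hma, hle, hv2.symm⟩
  · rintro rfl; linarith
  · rw [hv2]; exact lt_of_le_of_ne hz1.2 (by rintro rfl; linarith)

lemma setup_y {f : ℝ → ℝ} (hf : Continuous f) {a v z : ℝ} (hav : a < v) (hvz : v < z)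
    (hz : f z = z) (hzv : z < f v) (hffv : f (f v) = a) (haa : a < f (f a)) :
    ∃ y, a < y ∧ y < v ∧ f (f y) = y ∧ z < f y ∧
      (∀ x, y < x → x ≤ v → f (f x) < x ∧ z < f x) := by
  have hg : Continuous (fun x => f (f x) - x) := by fun_prop
  obtain ⟨y, hy1, hy2, hy3⟩ := exists_max_of hg (p := a) (q := v) (c := 0) (by
    obtain ⟨x, h1, h2⟩ := ivt_val hg (p := v) (q := a) (c := 0) (by linarith) (by linarith)
    rw [uIcc_of_ge hav.le] at h1; exact ⟨x, h1, h2⟩)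
  have hyy : f (f y) = y := by linarith
  have hyv : y < v := lt_of_le_of_ne hy1.2 (by rintro rfl; linarith)
  have hay : a < y := lt_of_le_of_ne hy1.1 (by rintro rfl; linarith)
  have h1 : ∀ x, y < x → x ≤ v → f (f x) < x := by
    intro x hx1 hx2
    by_contra! hcon
    obtain ⟨w, h1, h2⟩ := ivt_val hg (p := v) (q := x) (c := 0) (by linarith) (by linarith)
    rw [uIcc_of_ge hx2] at h1
    have := hy3 w ⟨by linarith [h1.1], h1.2⟩ h2
    linarith [h1.1]
  have h2 : ∀ x, y ≤ x → x ≤ v → z < f x := by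
    intro x hx1 hx2
    by_contra! hcon
    obtain ⟨w, hw1, hw2⟩ := ivt_val hf (p := x) (q := v) (c := z) hcon hzv.le
    rw [uIcc_of_le hx2] at hw1
    have hwz : f (f w) = z := by rw [hw2, hz]
    rcases eq_or_lt_of_le (hx1.trans hw1.1) with h | h
    · rw [← h, hyy] at hwz; linarith
    · linarith [h1 w h hw1.2, hw1.2]
  exact ⟨y, hay, hyv, hyy, h2 y le_rfl hyv.le, fun x hx hx' => ⟨h1 x hx hx', h2 x hx.le hx'⟩⟩

lemma per_two {f : ℝ → ℝ} (hf : Continuous f) {m : ℕ} (hm : 3 ≤ m) (h : HasPer f m) :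
    HasPer f 2 := by
  obtain ⟨a, v, z, hav, hvz, hz, hzv, hffv, haa, -⟩ := setup hf hm h
  obtain ⟨y, hay, hyv, hyy, hzy, -⟩ := setup_y hf hav hvz hz hzv hffv haa
  refine ⟨by norm_num, y, hasPer_of (by norm_num) hyy fun j h0 h1 => ?_⟩
  have : j = 1 := by omega
  subst this
  intro h
  simp at h
  linarith

lemma per_one {f : ℝ → ℝ} (hf : Continuous f) {m : ℕ} (h : HasPer f m) : HasPer f 1 := by
  have key : HasPer f 2 → HasPer f 1 := by
    rintro ⟨_, x, hx⟩
    have h2 : f (f x) = x := by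
      have := iterate_minimalPeriod (f := f) (x := x)
      rw [hx] at this; exact this
    have : ∃ w, f w = w := by
      rcases le_total x (f x) with h | h
      · obtain ⟨w, -, hw⟩ := ivt_fix hf (p := f x) (q := x) (by rw [h2]; exact h) h
        exact ⟨w, hw⟩
      · obtain ⟨w, -, hw⟩ := ivt_fix hf (p := x) (q := f x) h (by rw [h2]; exact h)
        exact ⟨w, hw⟩
    obtain ⟨w, hw⟩ := this
    exact ⟨by norm_num, w, hasPer_of (by norm_num) hw fun j _ _ => by omega⟩
  rcases lt_trichotomy m 2 with h2 | h2 | h2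
  · have : m = 1 := by have := h.1; omega
    rwa [← this]
  · exact key (h2 ▸ h)
  · exact key (per_two hf h2 h)

lemma per_add_two {f : ℝ → ℝ} (hf : Continuous f) {m : ℕ} (hm : 3 ≤ m) (hodd : Odd m)
    (h : HasPer f m) : HasPer f (m + 2) := by
  obtain ⟨a, v, z, hav, hvz, hz, hzv, hffv, haa, hma, -⟩ := setup hf hm h
  obtain ⟨y, hay, hyv, hyy, hzy, hy⟩ := setup_y hf hav hvz hz hzv hffv haa
  have hodd_y : ∀ k, Odd k → f^[k] y = f y := by
    rintro k ⟨j, rfl⟩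
    rw [it_succ, iterate_mul]
    congr 1
    exact iterate_fixed hyy j
  have hg : ∀ k, Continuous (fun x => f^[k] x - x) := fun k => (hf.iterate k).sub continuous_id
  obtain ⟨p, hp1, hp2, hp3⟩ := exists_min_of (hg (m+2)) (p := y) (q := v) (c := 0) (by
    obtain ⟨x, h1, h2⟩ := ivt_val (hg (m+2)) (p := v) (q := y) (c := 0)
      (by rw [iterate_add_apply]; change f^[m] (f (f v)) - v ≤ 0; rw [hffv, hma]; linarith)
      (by rw [hodd_y _ (by rw [Nat.odd_add]; simp [hodd])]; linarith)
    rw [uIcc_of_ge hyv.le] at h1; exact ⟨x, h1, h2⟩)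
  have hpp : f^[m+2] p = p := by linarith
  have hodd2 : Odd (m+2) := by rw [Nat.odd_add]; simp [hodd]
  have hyp : y < p := lt_of_le_of_ne hp1.1 (by
    rintro rfl; rw [hodd_y _ hodd2] at hpp; linarith)
  refine ⟨by omega, p, ?_⟩
  have hper : IsPeriodicPt f (m+2) p := hpp
  set k := minimalPeriod f p with hk
  have hdvd : k ∣ m + 2 := hper.minimalPeriod_dvd
  have hkodd : Odd k := hodd2.of_dvd_nat hdvd
  have hfk : f^[k] p = p := iterate_minimalPeriod
  by_contra hne
  have hlt : k < m + 2 := lt_of_le_of_ne (Nat.le_of_dvd (by omega) hdvd) hne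
  have key : ∀ j, ∃ x, y < x ∧ x ≤ p ∧ f^[k + 2 * j] x = x ∧ (0 < j → x < p) := by
    intro j
    induction j with
    | zero => exact ⟨p, hyp, le_rfl, hfk, by simp⟩
    | succ j ih =>
      obtain ⟨x, hx1, hx2, hx3, -⟩ := ih
      have hxv : x ≤ v := hx2.trans hp1.2
      have e1 : f^[k + 2 * (j+1)] x = f (f x) := by
        rw [show k + 2 * (j+1) = 2 + (k + 2 * j) by ring, iterate_add_apply, hx3]; rfl
      have ho : Odd (k + 2 * (j+1)) := by
        rw [Nat.odd_add]; simp [hkodd]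
      have e2 : f^[k + 2 * (j+1)] y = f y := hodd_y _ ho
      have h1 := (hy x hx1 hxv).1
      obtain ⟨w, hw1, hw2⟩ := ivt_fix (hf.iterate (k + 2 * (j+1))) (p := x) (q := y)
        (by rw [e1]; exact h1.le) (by rw [e2]; linarith)
      rw [uIcc_of_ge hx1.le] at hw1
      have hwx : w < x := lt_of_le_of_ne hw1.2 (by
        rintro rfl; rw [e1] at hw2; linarith)
      have hyw : y < w := lt_of_le_of_ne hw1.1 (by
        rintro rfl; rw [e2] at hw2; linarith)
      exact ⟨w, hyw, by linarith, hw2, fun _ => by linarith⟩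
  obtain ⟨r, hr⟩ := hkodd
  obtain ⟨s, hs⟩ := hodd2
  obtain ⟨x, hx1, hx2, hx3, hx4⟩ := key (s - r)
  have hx4 := hx4 (by omega)
  rw [show k + 2 * (s - r) = m + 2 by omega] at hx3
  have := hp3 x ⟨hx1.le, hx2.trans hp1.2⟩ (by linarith)
  linarith

lemma per_even {f : ℝ → ℝ} (hf : Continuous f) {m : ℕ} (hm : 3 ≤ m) (hodd : Odd m)
    (h : HasPer f m) {n : ℕ} (hn : 0 < n) : HasPer f (2 * n) := by
  rcases (show n = 1 ∨ 2 ≤ n by omega) with rfl | hn2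
  · exact per_two hf hm h
  obtain ⟨a, v, z, hav, hvz, hz, hzv, hffv, haa, hma, hle, hb⟩ := setup hf hm h
  obtain ⟨y, hay, hyv, hyy, hzy, hy⟩ := setup_y hf hav hvz hz hzv hffv haa
  set g : ℝ → ℝ := f^[2] with hgdef
  have hgx : ∀ x, g x = f (f x) := fun x => rfl
  have hg : Continuous g := hf.iterate 2
  have hgc : Continuous (fun x => g x - x) := hg.sub continuous_id
  obtain ⟨z0, hz1, hz2, hz3⟩ := exists_min_of hgc (p := v) (q := z) (c := 0)
    ⟨z, ⟨hvz.le, le_rfl⟩, by simp [hgx, hz]⟩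
  have hgz0 : g z0 = z0 := by linarith
  have hvz0 : v < z0 := lt_of_le_of_ne hz1.1 (by
    rintro rfl; rw [hgx, hffv] at hgz0; linarith)
  have hR1 : ∀ x, v ≤ x → x < z0 → g x < x := by
    intro x h1 h2
    by_contra! hcon
    obtain ⟨w, hw1, hw2⟩ := ivt_fix hg (p := v) (q := x) (by rw [hgx, hffv]; exact hav.le) hcon
    rw [uIcc_of_le h1] at hw1
    have := hz3 w ⟨hw1.1, by linarith [hw1.2, hz1.2]⟩ (by linarith)
    linarith [hw1.2]
  have hR2 : ∀ x ∈ Icc v z0, z ≤ f x := by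
    intro x hx
    by_contra! hcon
    obtain ⟨w, hw1, hw2⟩ := ivt_val hf hcon.le hzv.le
    rw [uIcc_of_ge hx.1] at hw1
    have hwx : w < x := lt_of_le_of_ne hw1.2 (by rintro rfl; linarith)
    have := hR1 w hw1.1 (by linarith [hx.2])
    rw [hgx, hw2, hz] at this
    linarith [hx.2, hz1.2]
  -- existence of `d`
  have hex : ∃ x ∈ Icc a y, z0 ≤ g x := by
    by_contra! hcon
    have hall : ∀ x ∈ Icc a z0, g x ≤ z0 := by
      intro x hx
      rcases le_or_gt x y with h1 | h1
      · exact (hcon x ⟨hx.1, h1⟩).le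
      rcases le_or_gt x v with h2 | h2
      · have := (hy x h1 h2).1
        rw [← hgx] at this; linarith
      rcases eq_or_lt_of_le hx.2 with h3 | h3
      · rw [h3, hgz0]
      · linarith [hR1 x h2.le h3]
    have horb : ∀ i, g^[i] a ≤ z0 := by
      intro i
      induction i with
      | zero => simp; linarith
      | succ i ih =>
        rw [it_succ]
        exact hall _ ⟨by rw [hgdef, ← iterate_mul]; exact hle _, ih⟩
    obtain ⟨r, hr⟩ := hodd
    have h1 := horb r
    rw [hgdef, ← iterate_mul, show 2 * r = m - 1 by omega, hb] at h1
    linarith [hz1.2]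
  obtain ⟨d, hd1, hd2, hd3⟩ := exists_max_of hg (p := a) (q := y) (c := z0) (by
    obtain ⟨x, hx1, hx2⟩ := hex
    obtain ⟨w, hw1, hw2⟩ := ivt_val hg (p := y) (q := x) (c := z0)
      (by rw [hgx, hyy]; linarith) hx2
    rw [uIcc_of_ge hx1.2] at hw1
    exact ⟨w, ⟨hx1.1.trans hw1.1, hw1.2⟩, hw2⟩)
  have hK : ∀ x ∈ Icc d y, z ≤ f x := by
    intro x hx
    by_contra! hcon
    obtain ⟨w, hw1, hw2⟩ := ivt_val hf hcon.le hzy.le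
    rw [uIcc_of_le hx.2] at hw1
    have hwx : x < w := lt_of_le_of_ne hw1.1 (by rintro rfl; linarith)
    obtain ⟨u, hu1, hu2⟩ := ivt_val hg (p := y) (q := w) (c := z0)
      (by rw [hgx, hyy]; linarith) (by rw [hgx, hw2, hz]; exact hz1.2)
    rw [uIcc_of_ge hw1.2] at hu1
    have := hd3 u ⟨by linarith [hu1.1, hx.1, hd1.1], hu1.2⟩ hu2
    linarith [hu1.1, hx.1]
  have key : ∀ k, ∃ p ∈ Icc d y, ∃ q ∈ Icc d y, g^[k+1] p = v ∧ g^[k+1] q = z0 ∧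
      ∀ x ∈ uIcc p q, ∀ i, 1 ≤ i → i ≤ k + 1 → g^[i] x ∈ Icc v z0 := by
    intro k
    induction k with
    | zero =>
      obtain ⟨p, hp, q, hq, h1, h2, h3⟩ := cover hg (p := y) (q := d) (r := v) (s := z0) hvz0.le
        (by rw [hgx, hyy]; exact hyv.le) hd2.ge
      rw [uIcc_of_ge hd1.2] at hp hq
      refine ⟨p, hp, q, hq, h1, h2, fun x hx i hi1 hi2 => ?_⟩
      have : i = 1 := by omega
      subst this
      exact h3 x hx
    | succ k ih =>
      obtain ⟨p, hp, q, hq, h1, h2, h3⟩ := ih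
      obtain ⟨p', hp', q', hq', h1', h2', h3'⟩ := cover (hg.iterate (k+1+1)) (p := p) (q := q)
        (r := v) (s := z0) hvz0.le
        (by rw [it_succ, h1, hgx, hffv]; exact hav.le)
        (by rw [it_succ, h2, hgz0])
      have hsub : uIcc p q ⊆ Icc d y := ordConnected_Icc.uIcc_subset hp hq
      refine ⟨p', hsub hp', q', hsub hq', h1', h2', fun x hx i hi1 hi2 => ?_⟩
      rcases Nat.lt_or_ge i (k+1+1) with h | h
      · exact h3 x (uIcc_subset_uIcc hp' hq' hx) i hi1 (by omega)
      · have : i = k+1+1 := by omega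
        subst this
        exact h3' x hx
  obtain ⟨k, rfl⟩ : ∃ k, n = k + 2 := ⟨n - 2, by omega⟩
  obtain ⟨p, hp, q, hq, h1, h2, h3⟩ := key k
  obtain ⟨x, hx1, hx2⟩ := ivt_fix (hg.iterate (k+2)) (p := p) (q := q)
    (by rw [it_succ, h1, hgx, hffv]; linarith [hp.1, hd1.1])
    (by rw [it_succ, h2, hgz0]; linarith [hq.2])
  have hxK : x ∈ Icc d y := ordConnected_Icc.uIcc_subset hp hq hx1
  have hit : ∀ i, f^[2*i] x = g^[i] x := fun i => by rw [hgdef, ← iterate_mul]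
  refine ⟨by omega, x, hasPer_of (by omega) (by rw [hit, hx2]) fun j hj1 hj2 hj3 => ?_⟩
  rcases Nat.even_or_odd' j with ⟨i, rfl | rfl⟩
  · rw [hit] at hj3
    have := h3 x hx1 i (by omega) (by omega)
    rw [hj3] at this
    linarith [this.1, hxK.2]
  · rw [it_succ, hit] at hj3
    have : z ≤ f (g^[i] x) := by
      rcases Nat.eq_zero_or_pos i with rfl | hi
      · exact hK x hxK
      · exact hR2 _ (h3 x hx1 i hi (by omega))
    rw [hj3] at this
    linarith [hxK.2]

lemma per_down {f : ℝ → ℝ} {m k : ℕ} (hk : 0 < k) (h : HasPer f m) :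
    HasPer (f^[k]) (m / m.gcd k) := by
  obtain ⟨h0, x, hx⟩ := h
  refine ⟨Nat.div_pos (Nat.le_of_dvd h0 (Nat.gcd_dvd_left _ _)) (Nat.gcd_pos_of_pos_left _ h0), x, ?_⟩
  rw [minimalPeriod_iterate_eq_div_gcd hk.ne', hx]

lemma per_down' {f : ℝ → ℝ} {j k : ℕ} (h : HasPer f (2^k * j)) : HasPer (f^[2^k]) j := by
  have := per_down (k := 2^k) (by positivity) h
  rwa [Nat.gcd_eq_right (Dvd.intro _ rfl), Nat.mul_div_cancel_left _ (by positivity)] at this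

lemma per_up_gen {f : ℝ → ℝ} {j k : ℕ} (h : HasPer (f^[2^k]) j) :
    ∃ i ≤ k, HasPer f (2^i * j) ∧ (i < k → ¬ 2 ∣ j) := by
  obtain ⟨h0, x, hx⟩ := h
  rw [minimalPeriod_iterate_eq_div_gcd (by positivity)] at hx
  set n := minimalPeriod f x with hn
  obtain ⟨i, hi, hg⟩ := (Nat.dvd_prime_pow Nat.prime_two).1 (Nat.gcd_dvd_right n (2^k))
  have hnj : n = 2^i * j := by
    rw [← hx, hg, Nat.mul_div_cancel']
    rw [← hg]; exact Nat.gcd_dvd_left _ _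
  refine ⟨i, hi, ⟨by positivity, x, by rw [← hn, hnj]⟩, fun hik h2 => ?_⟩
  have h1 : 2^(i+1) ∣ n := by rw [hnj, pow_succ]; exact Nat.mul_dvd_mul_left _ h2
  have h3 := Nat.dvd_gcd h1 (pow_dvd_pow 2 (show i + 1 ≤ k from hik))
  rw [hg] at h3
  have := (Nat.pow_dvd_pow_iff_le_right (le_refl 2)).1 h3
  omega

lemma per_up {f : ℝ → ℝ} {j k : ℕ} (h : HasPer (f^[2^k]) (2 * j)) : HasPer f (2^k * (2 * j)) := by
  obtain ⟨i, hi, h1, h2⟩ := per_up_gen h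
  rcases hi.lt_or_eq with h3 | rfl
  · exact absurd (Dvd.intro _ rfl) (h2 h3)
  · exact h1

lemma per_odd_up {f : ℝ → ℝ} (hf : Continuous f) {b : ℕ} (hb : 1 < b) (ho : Odd b)
    (h : HasPer f b) (k : ℕ) : HasPer f (b + 2 * k) := by
  induction k with
  | zero => exact h
  | succ k ih =>
    exact per_add_two (m := b + 2 * k) hf (by obtain ⟨r, hr⟩ := ho; omega)
      (by rw [Nat.odd_add]; simp [ho]) ih

lemma per_pow {f : ℝ → ℝ} (hf : Continuous f) {m c : ℕ} (h : HasPer f m)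
    (h3 : ∀ k, k < c → 3 ≤ m / m.gcd (2^k)) : HasPer f (2^c) := by
  rcases c with _ | c
  · exact per_one hf h
  · have h1 := per_two (hf.iterate (2^c)) (h3 c (Nat.lt_succ_self c)) (per_down (by positivity) h)
    have := per_up (j := 1) (k := c) h1
    rwa [mul_one, ← pow_succ] at this

lemma shark_real {f : ℝ → ℝ} (hf : Continuous f) {m n : ℕ} (hmn : SharkGT m n)
    (h : HasPer f m) : HasPer f n := by
  obtain ⟨a, b, c, d, hb, hd, rfl, rfl, hc⟩ := hmn
  rcases hc with ⟨hb1, hd1, hac | ⟨rfl, hbd⟩⟩ | ⟨hb1, rfl⟩ | ⟨rfl, rfl, hca⟩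
  · have h1 := per_down' h
    obtain ⟨e, rfl⟩ : ∃ e, c = a + (e + 1) := ⟨c - a - 1, by omega⟩
    have h2 := per_even (hf.iterate (2^a)) (by obtain ⟨r, hr⟩ := hb; omega) hb h1
      (n := 2^e * d) (by positivity)
    have h3 := per_up h2
    convert h3 using 1
    ring
  · obtain ⟨k, rfl⟩ : ∃ k, d = b + 2 * k := by
      obtain ⟨r, hr⟩ := hb
      obtain ⟨s, hs⟩ := hd
      exact ⟨s - r, by omega⟩
    rcases a with _ | a
    · simp only [pow_zero, one_mul] at h ⊢
      exact per_odd_up hf hb1 hb h k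
    · rw [pow_succ, mul_assoc] at h ⊢
      have h1 : HasPer (f^[2^a]) (2^1 * b) := per_down' h
      have h2 := per_odd_up ((hf.iterate (2^a)).iterate (2^1)) hb1 hb (per_down' h1) k
      obtain ⟨i, hi, h3, -⟩ := per_up_gen h2
      apply per_up
      rcases (show i = 0 ∨ i = 1 by omega) with rfl | rfl
      · rw [pow_zero, one_mul] at h3
        exact per_even (hf.iterate (2^a)) (by obtain ⟨r, hr⟩ := hb; omega) hd h3 (by omega)
      · exact h3
  · rw [mul_one]
    refine per_pow hf h fun k _ => ?_
    have hcop : Nat.Coprime b (2^k) := (Nat.Coprime.pow_right k hb.coprime_two_right)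
    rw [Nat.Coprime.gcd_mul_right_cancel _ hcop]
    have h1 : Nat.gcd (2^a) (2^k) ∣ 2^a := Nat.gcd_dvd_left _ _
    rw [Nat.mul_div_right_comm h1]
    have h2 : 0 < 2^a / Nat.gcd (2^a) (2^k) :=
      Nat.div_pos (Nat.le_of_dvd (by positivity) h1) (Nat.gcd_pos_of_pos_left _ (by positivity))
    have h3 : 3 ≤ b := by obtain ⟨r, hr⟩ := hb; omega
    nlinarith
  · rw [mul_one] at h ⊢
    refine per_pow hf h fun k hk => ?_
    rw [Nat.gcd_eq_right (pow_dvd_pow 2 (by omega)), Nat.pow_div (by omega) (by norm_num)]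
    calc 3 ≤ 2^2 := by norm_num
      _ ≤ _ := Nat.pow_le_pow_right (by norm_num) (by omega)

lemma mem_PerSet {f : ℝ → ℝ} {n : ℕ} :
    n ∈ PerSet f ↔ 0 < n ∧ ∃ x ∈ Icc (0:ℝ) 1, minimalPeriod f x = n := by
  constructor
  · rintro ⟨h0, x, hx, h1, h2⟩
    exact ⟨h0, x, hx, hasPer_of h0 h1 h2⟩
  · rintro ⟨h0, x, hx, rfl⟩
    refine ⟨h0, x, hx, iterate_minimalPeriod, fun j h1 h2 h3 => ?_⟩
    have : IsPeriodicPt f j x := h3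
    have := this.minimalPeriod_le h1
    omega

lemma ext_exists {f : ℝ → ℝ} (hf : ContinuousOn f (Icc 0 1))
    (hm : MapsTo f (Icc (0:ℝ) 1) (Icc (0:ℝ) 1)) :
    ∃ F : ℝ → ℝ, Continuous F ∧ ∀ n, n ∈ PerSet f ↔ HasPer F n := by
  have h01 : (0:ℝ) ≤ 1 := zero_le_one
  set F : ℝ → ℝ := IccExtend h01 ((Icc (0:ℝ) 1).domRestrict f) with hF
  have hFc : Continuous F := hf.domRestrict.Icc_extend'
  have hFI : ∀ x ∈ Icc (0:ℝ) 1, F x = f x := fun x hx => IccExtend_of_mem h01 _ hx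
  have hFr : ∀ x, F x ∈ Icc (0:ℝ) 1 := fun x => hm (projIcc 0 1 h01 x).2
  have hit : ∀ x ∈ Icc (0:ℝ) 1, ∀ i, F^[i] x = f^[i] x := by
    intro x hx i
    induction i with
    | zero => rfl
    | succ i ih => rw [it_succ, it_succ, ih, hFI _ (hm.iterate i hx)]
  refine ⟨F, hFc, fun n => ⟨?_, ?_⟩⟩
  · rintro ⟨h0, x, hx, h1, h2⟩
    refine ⟨h0, x, hasPer_of h0 (by rw [hit x hx, h1]) fun j h3 h4 => ?_⟩
    rw [hit x hx]; exact h2 j h3 h4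
  · rintro ⟨h0, x, rfl⟩
    have hx : x ∈ Icc (0:ℝ) 1 := by
      obtain ⟨k, hk⟩ : ∃ k, minimalPeriod F x = k + 1 := ⟨minimalPeriod F x - 1, by omega⟩
      have h := iterate_minimalPeriod (f := F) (x := x)
      rw [hk, it_succ] at h
      rw [← h]; exact hFr _
    refine ⟨h0, x, hx, by rw [← hit x hx]; exact iterate_minimalPeriod, fun j h1 h2 h3 => ?_⟩
    rw [← hit x hx] at h3
    have : IsPeriodicPt F j x := h3
    have := this.minimalPeriod_le h1
    omega

lemma shark_one {f : ℝ → ℝ} (hf : ContinuousOn f (Icc 0 1))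
    (hm : MapsTo f (Icc (0:ℝ) 1) (Icc (0:ℝ) 1)) {m n : ℕ} (h : SharkGT m n)
    (hp : m ∈ PerSet f) : n ∈ PerSet f := by
  obtain ⟨F, hF, hi⟩ := ext_exists hf hm
  rw [hi] at hp ⊢
  exact shark_real hF h hp

lemma one_mem {f : ℝ → ℝ} (hf : ContinuousOn f (Icc 0 1))
    (hm : MapsTo f (Icc (0:ℝ) 1) (Icc (0:ℝ) 1)) : 1 ∈ PerSet f := by
  have hc : ContinuousOn (fun x => f x - x) (Icc 0 1) := hf.sub continuousOn_id
  have h0 := hm (left_mem_Icc.2 zero_le_one)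
  have h1 := hm (right_mem_Icc.2 zero_le_one)
  obtain ⟨x, hx, h⟩ := intermediate_value_Icc' (zero_le_one' ℝ) hc
    (show (0:ℝ) ∈ _ from ⟨by linarith [h1.2], by linarith [h0.1]⟩)
  refine ⟨one_pos, x, hx, ?_, fun j _ _ => by omega⟩
  simpa [sub_eq_zero] using h

lemma decomp {n : ℕ} (hn : 0 < n) : ∃ a b, Odd b ∧ n = 2^a * b := by
  obtain ⟨a, b, h1, h2⟩ := Nat.exists_eq_two_pow_mul_odd hn.ne'
  exact ⟨a, b, h1, h2⟩

lemma odd_cases {b : ℕ} (h : Odd b) : b = 1 ∨ 1 < b := by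
  obtain ⟨r, hr⟩ := h; omega

lemma decomp_unique {a b c d : ℕ} (hb : Odd b) (hd : Odd d) (h : 2^a * b = 2^c * d) :
    a = c ∧ b = d := by
  have key : ∀ {a b c d : ℕ}, Odd b → Odd d → 2^a * b = 2^c * d → a ≤ c := by
    intro a b c d hb hd h
    have h1 : 2^a ∣ 2^c * d := h ▸ Dvd.intro _ rfl
    have h2 : Nat.Coprime (2^a) d := Nat.Coprime.pow_left a hd.coprime_two_left
    exact (Nat.pow_dvd_pow_iff_le_right (le_refl 2)).1 (h2.dvd_of_dvd_mul_right h1)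
  have : a = c := le_antisymm (key hb hd h) (key hd hb h.symm)
  subst this
  exact ⟨rfl, Nat.eq_of_mul_eq_mul_left (by positivity) h⟩

lemma shark_irrefl {m : ℕ} : ¬ SharkGT m m := by
  rintro ⟨a, b, c, d, hb, hd, rfl, h, hc⟩
  obtain ⟨rfl, rfl⟩ := decomp_unique hb hd h
  omega

lemma shark_total {m n : ℕ} (hm : 0 < m) (hn : 0 < n) : m = n ∨ SharkGT m n ∨ SharkGT n m := by
  obtain ⟨a, b, hb, rfl⟩ := decomp hm
  obtain ⟨c, d, hd, rfl⟩ := decomp hn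
  by_cases heq : a = c ∧ b = d
  · left; rw [heq.1, heq.2]
  right
  have hb1 := odd_cases hb
  have hd1 := odd_cases hd
  by_cases hlt : (1 < b ∧ 1 < d ∧ (a < c ∨ (a = c ∧ b < d))) ∨ (1 < b ∧ d = 1) ∨
     (b = 1 ∧ d = 1 ∧ c < a)
  · left; exact ⟨a, b, c, d, hb, hd, rfl, rfl, hlt⟩
  · right; exact ⟨c, d, a, b, hd, hb, rfl, rfl, by omega⟩

lemma shark_pos {m n : ℕ} (h : SharkGT m n) : 0 < m ∧ 0 < n := by
  obtain ⟨a, b, c, d, hb, hd, rfl, rfl, -⟩ := h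
  have := hb.pos
  have := hd.pos
  constructor <;> positivity

lemma shark_two {S : Set ℕ} (hpos : ∀ n ∈ S, 0 < n) (h1 : 1 ∈ S)
    (hS : ∀ m n, SharkGT m n → m ∈ S → n ∈ S) :
    ∃ k : Option ℕ, (∀ j : ℕ, k = some j → 0 < j) ∧ S = ShSet k := by
  classical
  by_cases hA : ∃ a, ∃ b, Odd b ∧ 1 < b ∧ 2^a * b ∈ S
  · have hB := Nat.find_spec hA
    have hmin := fun c (hc : c < Nat.find hA) => Nat.find_min hA hc
    set a := Nat.find hA
    obtain ⟨hb, hb1, hbS⟩ := Nat.find_spec hB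
    have hmin' := fun c (hc : c < Nat.find hB) => Nat.find_min hB hc
    set b := Nat.find hB
    refine ⟨some (2^a * b), by rintro j hj; cases hj; positivity, ?_⟩
    ext n
    constructor
    · intro hn
      obtain ⟨c, d, hd, rfl⟩ := decomp (hpos n hn)
      by_cases heq : a = c ∧ b = d
      · left; rw [heq.1, heq.2]
      right
      refine ⟨a, b, c, d, hb, hd, rfl, rfl, ?_⟩
      rcases odd_cases hd with h | h
      · omega
      · left
        refine ⟨hb1, h, ?_⟩
        have h2 : a ≤ c := by
          by_contra! hc
          exact hmin c hc ⟨d, hd, h, hn⟩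
        rcases h2.lt_or_eq with h3 | h3
        · exact Or.inl h3
        · right
          refine ⟨h3, ?_⟩
          by_contra! hc
          exact hmin' d (by omega) ⟨hd, h, h3 ▸ hn⟩
    · rintro (rfl | hn)
      · exact hbS
      · exact hS _ _ hn hbS
  · push Not at hA
    have hpow : ∀ n ∈ S, ∃ c, n = 2^c := by
      intro n hn
      obtain ⟨c, d, hd, rfl⟩ := decomp (hpos n hn)
      rcases odd_cases hd with h | h
      · exact ⟨c, by rw [h, mul_one]⟩
      · exact absurd hn (hA c d hd h)
    have hgt : ∀ {i j : ℕ}, j < i → SharkGT (2^i) (2^j) := fun {i j} h =>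
      ⟨i, 1, j, 1, odd_one, odd_one, by simp, by simp, by omega⟩
    by_cases hall : ∃ j, 2^j ∉ S
    · have hB := Nat.find_spec hall
      have hmin := fun c (hc : c < Nat.find hall) => Nat.find_min hall hc
      set j := Nat.find hall
      have hj : j ≠ 0 := by intro h; rw [h] at hB; exact hB (by simpa using h1)
      obtain ⟨i, hi⟩ := Nat.exists_eq_succ_of_ne_zero hj
      have hiS : 2^i ∈ S := by simpa using hmin i (by omega)
      refine ⟨some (2^i), by rintro j hj; cases hj; positivity, ?_⟩
      ext n
      constructor
      · intro hn
        obtain ⟨c, rfl⟩ := hpow n hn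
        have hcj : c < j := by
          by_contra! hc
          rcases hc.lt_or_eq with h | h
          · exact hB (hS _ _ (hgt h) hn)
          · exact hB (h ▸ hn)
        rcases (show c ≤ i by omega).lt_or_eq with h | h
        · right; exact hgt h
        · left; rw [h]
      · rintro (rfl | hn)
        · exact hiS
        · exact hS _ _ hn hiS
    · push Not at hall
      refine ⟨none, by simp, ?_⟩
      ext n
      constructor
      · exact hpow n
      · rintro ⟨c, rfl⟩; exact hall c

/-- The full tent map. -/
def tent (x : ℝ) : ℝ := 1 - |1 - 2 * x|

/-- The tent map truncated at height `h`. -/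
def trunc (h x : ℝ) : ℝ := min h (tent x)

lemma tent_cont : Continuous tent := by unfold tent; fun_prop

lemma trunc_cont (h : ℝ) : Continuous (trunc h) := continuous_const.min tent_cont

lemma tent_maps : MapsTo tent (Icc (0:ℝ) 1) (Icc (0:ℝ) 1) := by
  intro x hx
  unfold tent
  have h1 : |1 - 2 * x| ≤ 1 := by rw [abs_le]; constructor <;> linarith [hx.1, hx.2]
  constructor <;> linarith [abs_nonneg (1 - 2 * x)]

lemma trunc_maps {h : ℝ} (hh : h ∈ Icc (0:ℝ) 1) :
    MapsTo (trunc h) (Icc (0:ℝ) 1) (Icc (0:ℝ) 1) := fun _ hx =>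
  ⟨le_min hh.1 (tent_maps hx).1, (min_le_left _ _).trans hh.2⟩

lemma tent_iter (x : ℝ) (n : ℕ) :
    ∃ c : ℤ, tent^[n] x = 2^n * x + c ∨ tent^[n] x = -(2^n * x) + c := by
  induction n with
  | zero => exact ⟨0, by simp⟩
  | succ n ih =>
    obtain ⟨c, hc⟩ := ih
    rw [it_succ]
    have h2 : ∀ t, tent t = 2 * t ∨ tent t = 2 - 2 * t := by
      intro t
      unfold tent
      rcases abs_choice (1 - 2 * t) with h | h <;> rw [h]
      · left; ring
      · right; ring
    rcases h2 (tent^[n] x) with h | h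
    · refine ⟨2 * c, ?_⟩
      rcases hc with hc | hc
      · left; rw [h, hc]; push_cast; ring
      · right; rw [h, hc]; push_cast; ring
    · refine ⟨2 - 2 * c, ?_⟩
      rcases hc with hc | hc
      · right; rw [h, hc]; push_cast; ring
      · left; rw [h, hc]; push_cast; ring

lemma tent_fin {n : ℕ} (hn : 0 < n) : {x | x ∈ Icc (0:ℝ) 1 ∧ tent^[n] x = x}.Finite := by
  have hfin : ∀ K : ℝ, 0 < K → {x | x ∈ Icc (0:ℝ) 1 ∧ ∃ c : ℤ, K * x = c}.Finite := by
    intro K hK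
    refine ((Set.finite_Icc (0:ℤ) ⌊K⌋).image (fun c : ℤ => (c:ℝ) / K)).subset ?_
    rintro x ⟨hx, c, hc⟩
    refine ⟨c, ⟨?_, ?_⟩, ?_⟩
    · have : (0:ℝ) ≤ c := by rw [← hc]; exact mul_nonneg hK.le hx.1
      exact_mod_cast this
    · rw [Int.le_floor, ← hc]; nlinarith [hx.2]
    · simp only; rw [← hc]; field_simp
  have h2 : (1:ℝ) < 2^n := one_lt_pow₀ (by norm_num) hn.ne'
  refine ((hfin (2^n - 1) (by linarith)).union (hfin (2^n + 1) (by linarith))).subset ?_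
  rintro x ⟨hx, h⟩
  obtain ⟨c, hc | hc⟩ := tent_iter x n
  · left; exact ⟨hx, -c, by push_cast; linarith⟩
  · right; exact ⟨hx, c, by linarith⟩

/-- Maxima of `m`-cycles of the tent map. -/
def topSet (m : ℕ) : Set ℝ :=
  {x | x ∈ Icc (0:ℝ) 1 ∧ minimalPeriod tent x = m ∧ ∀ i, tent^[i] x ≤ x}

lemma topSet_of {m : ℕ} (hm : 0 < m) {x : ℝ} (hx : x ∈ Icc (0:ℝ) 1)
    (h : minimalPeriod tent x = m) : ∃ i, tent^[i] x ∈ topSet m := by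
  obtain ⟨i, hi, hmax⟩ := Finset.exists_max_image (Finset.range m) (fun i => tent^[i] x)
    ⟨0, by simpa using hm⟩
  have hxp : x ∈ periodicPts tent := by
    rw [← minimalPeriod_pos_iff_mem_periodicPts]; omega
  refine ⟨i, tent_maps.iterate i hx, by rw [minimalPeriod_apply_iterate hxp, h], fun j => ?_⟩
  have : tent^[j] (tent^[i] x) = tent^[(j + i) % m] x := by
    rw [← iterate_add_apply, ← h, iterate_mod_minimalPeriod_eq]
  rw [this]
  exact hmax _ (by simp; exact Nat.mod_lt _ hm)

lemma three_mem : 3 ∈ PerSet tent := by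
  have e1 : tent (2/7) = 4/7 := by
    unfold tent; rw [abs_of_nonneg (by norm_num)]; norm_num
  have e2 : tent (4/7) = 6/7 := by
    unfold tent; rw [abs_of_nonpos (by norm_num)]; norm_num
  have e3 : tent (6/7) = 2/7 := by
    unfold tent; rw [abs_of_nonpos (by norm_num)]; norm_num
  refine ⟨by norm_num, 2/7, ⟨by norm_num, by norm_num⟩, ?_, fun j h0 h3 => ?_⟩
  · simp [iterate_succ_apply, e1, e2, e3]
  · interval_cases j
    · simp [e1]
    · simp [iterate_succ_apply, e1, e2]

lemma shark_three {m : ℕ} (hm : 0 < m) : m = 3 ∨ SharkGT 3 m := by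
  obtain ⟨c, d, hd, rfl⟩ := decomp hm
  by_cases h : c = 0 ∧ d = 3
  · left; rw [h.1, h.2]; norm_num
  · right
    refine ⟨0, 3, c, d, by decide, hd, by norm_num, rfl, ?_⟩
    obtain ⟨r, hr⟩ := hd
    omega

lemma topSet_least {m : ℕ} (hm : 0 < m) : ∃ x, IsLeast (topSet m) x := by
  have hne : (topSet m).Nonempty := by
    have : m ∈ PerSet tent := by
      rcases shark_three hm with rfl | h
      · exact three_mem
      · exact shark_one tent_cont.continuousOn tent_maps h three_mem
    obtain ⟨_, x, hx, h⟩ := mem_PerSet.1 this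
    obtain ⟨i, hi⟩ := topSet_of hm hx h
    exact ⟨_, hi⟩
  have hfin : (topSet m).Finite := (tent_fin hm).subset fun x hx => ⟨hx.1, by
    rw [← hx.2.1]; exact iterate_minimalPeriod⟩
  obtain ⟨x, hx, hx2⟩ := hfin.exists_minimal hne |>.imp fun x hx => And.intro hx.1 hx
  exact ⟨x, hx, fun y hy => by
    rcases le_total x y with h | h
    · exact h
    · exact hx2.2 hy h⟩

lemma minimalPeriod_congr' {f g : ℝ → ℝ} {x : ℝ} (h : ∀ i, f^[i] x = g^[i] x) :
    minimalPeriod f x = minimalPeriod g x := by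
  apply Nat.dvd_antisymm
  · apply IsPeriodicPt.minimalPeriod_dvd
    change f^[_] x = x
    rw [h]; exact iterate_minimalPeriod
  · apply IsPeriodicPt.minimalPeriod_dvd
    change g^[_] x = x
    rw [← h]; exact iterate_minimalPeriod

lemma trunc_of_top {m : ℕ} {x h : ℝ} (hx : x ∈ topSet m) (hxh : x ≤ h) :
    minimalPeriod (trunc h) x = m := by
  rw [← hx.2.1]
  apply minimalPeriod_congr'
  intro i
  induction i with
  | zero => rfl
  | succ i ih =>
    have := hx.2.2 (i+1)
    rw [it_succ] at this ⊢
    rw [it_succ, ih]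
    exact min_eq_right (this.trans hxh)

lemma tent_of_trunc {m : ℕ} (hm : 0 < m) {x h : ℝ} (hx : x ∈ Icc (0:ℝ) 1)
    (hp : minimalPeriod (trunc h) x = m) (hlt : ∀ i, (trunc h)^[i] x < h) :
    ∃ y ∈ topSet m, y < h := by
  have hit : ∀ i, (trunc h)^[i] x = tent^[i] x := by
    intro i
    induction i with
    | zero => rfl
    | succ i ih =>
      have := hlt (i+1)
      rw [it_succ, ih] at this
      rw [it_succ, it_succ, ih]
      rcases min_choice h (tent (tent^[i] x)) with h1 | h1
      · unfold trunc at this; rw [h1] at this; exact absurd this (lt_irrefl _)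
      · exact h1
  rw [minimalPeriod_congr' hit] at hp
  obtain ⟨i, hi⟩ := topSet_of hm hx hp
  exact ⟨_, hi, by rw [← hit]; exact hlt i⟩

lemma trunc_cases {m : ℕ} (hm : 0 < m) {h : ℝ} (hp : m ∈ PerSet (trunc h)) :
    (∃ y ∈ topSet m, y < h) ∨ minimalPeriod (trunc h) h = m := by
  obtain ⟨_, x, hx, hxm⟩ := mem_PerSet.1 hp
  have hxp : x ∈ periodicPts (trunc h) := by
    rw [← minimalPeriod_pos_iff_mem_periodicPts]; omega
  by_cases hlt : ∀ i, (trunc h)^[i] x < h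
  · left; exact tent_of_trunc hm hx hxm hlt
  · right
    push Not at hlt
    obtain ⟨i, hi⟩ := hlt
    have hle : (trunc h)^[i] x ≤ h := by
      have e : (trunc h)^[i] x = (trunc h)^[i + m] x := by
        rw [iterate_add_apply, ← hxm, iterate_minimalPeriod]
      obtain ⟨k, rfl⟩ : ∃ k, m = k + 1 := ⟨m - 1, by omega⟩
      rw [e, ← add_assoc, it_succ]
      exact min_le_left _ _
    have h3 := minimalPeriod_apply_iterate hxp i
    rwa [le_antisymm hle hi, hxm] at h3

lemma shark_three_nat {m : ℕ} (hm : 0 < m) {h : ℝ} (hh : IsLeast (topSet m) h) :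
    PerSet (trunc h) = ShSet (some m) := by
  have key : ∀ {m : ℕ}, 0 < m → ∀ {h : ℝ}, IsLeast (topSet m) h → ∀ {l : ℕ}, SharkGT m l →
      ∃ y ∈ topSet l, y < h := by
    intro m hm h hh l hl
    have hmem : m ∈ PerSet (trunc h) :=
      mem_PerSet.2 ⟨hm, h, hh.1.1, trunc_of_top hh.1 le_rfl⟩
    rcases trunc_cases (shark_pos hl).2
      (shark_one (trunc_cont h).continuousOn (trunc_maps hh.1.1) hl hmem) with h1 | h1
    · exact h1
    · rw [trunc_of_top hh.1 le_rfl] at h1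
      subst h1
      exact absurd hl shark_irrefl
  ext l
  constructor
  · intro hl
    have hl0 := hl.1
    rcases trunc_cases hl0 hl with ⟨y, hy, hyh⟩ | h1
    · rcases shark_total hm hl0 with rfl | h2 | h2
      · left; rfl
      · right; exact h2
      · obtain ⟨h', hh'⟩ := topSet_least hl0
        obtain ⟨w, hw, hwh⟩ := key hl0 hh' h2
        linarith [hh.2 hw, hh'.2 hy]
    · left
      rw [trunc_of_top hh.1 le_rfl] at h1
      exact h1.symm
  · rintro (rfl | hl)
    · exact mem_PerSet.2 ⟨hm, h, hh.1.1, trunc_of_top hh.1 le_rfl⟩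
    · obtain ⟨y, hy, hyh⟩ := key hm hh hl
      exact mem_PerSet.2 ⟨(shark_pos hl).2, y, hy.1, trunc_of_top hy hyh.le⟩

lemma shark_three_inf : ∃ h ∈ Icc (0:ℝ) 1, PerSet (trunc h) = ShSet none := by
  have hpos : ∀ j : ℕ, 0 < 2^j := fun j => by positivity
  choose H hH using fun j => topSet_least (hpos j)
  set s := sSup (range H) with hs
  have hbdd : BddAbove (range H) := ⟨1, by rintro _ ⟨j, rfl⟩; exact (hH j).1.1.2⟩
  have hle : ∀ j, H j ≤ s := fun j => le_csSup hbdd ⟨j, rfl⟩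
  have hsI : s ∈ Icc (0:ℝ) 1 := ⟨(hH 0).1.1.1.trans (hle 0),
    csSup_le (range_nonempty _) (by rintro _ ⟨j, rfl⟩; exact (hH j).1.1.2)⟩
  refine ⟨s, hsI, ?_⟩
  have hno : ∀ l, ∀ y ∈ topSet l, y < s → 0 < l → ∃ j, l = 2^j := by
    intro l y hy hys hl
    obtain ⟨_, ⟨j, rfl⟩, hj⟩ := exists_lt_of_lt_csSup (range_nonempty H) hys
    have : l ∈ PerSet (trunc (H j)) := mem_PerSet.2 ⟨hl, y, hy.1, trunc_of_top hy hj.le⟩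
    rw [shark_three_nat (hpos j) (hH j)] at this
    rcases this with rfl | ⟨a, b, c, d, hb, hd, h1, rfl, h2⟩
    · exact ⟨j, rfl⟩
    · have := decomp_unique (a := j) (b := 1) odd_one hb (by simpa using h1)
      have : d = 1 := by omega
      exact ⟨c, by rw [this, mul_one]⟩
  ext l
  constructor
  · intro hl
    by_contra hcon
    have hcon' : ¬ ∃ j, l = 2^j := hcon
    obtain ⟨c, d, hd, rfl⟩ := decomp hl.1
    have hd1 : 1 < d := by
      rcases odd_cases hd with h | h
      · exact absurd ⟨c, by rw [h, mul_one]⟩ hcon'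
      · exact h
    have hgt : SharkGT (2^c * d) (2^(c+1) * d) :=
      ⟨c, d, c+1, d, hd, hd, rfl, rfl, Or.inl ⟨hd1, hd1, Or.inl (Nat.lt_succ_self c)⟩⟩
    have hl2 := shark_one (trunc_cont s).continuousOn (trunc_maps hsI) hgt hl
    rcases trunc_cases hl.1 hl with ⟨y, hy, hys⟩ | h1
    · exact hcon' (hno _ y hy hys hl.1)
    rcases trunc_cases hl2.1 hl2 with ⟨y, hy, hys⟩ | h2
    · obtain ⟨j, hj⟩ := hno _ y hy hys hl2.1
      have := decomp_unique (c := j) (d := 1) hd odd_one (by simpa using hj)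
      omega
    · have := decomp_unique hd hd (h1.symm.trans h2)
      omega
  · rintro ⟨j, rfl⟩
    exact mem_PerSet.2 ⟨hpos j, H j, (hH j).1.1, trunc_of_top (hH j).1 (hle j)⟩

end helpers

/-- **Sharkovsky's theorem.**
(1) If `f : [0,1] → [0,1]` is continuous, `m ≻ n` in the Sharkovsky ordering and
`m ∈ Per(f)`, then `n ∈ Per(f)`.
(2) For every continuous `f : [0,1] → [0,1]` there is `k ∈ ℕ ∪ {2^∞}` with
`Per(f) = Sh(k)`.
(3) Conversely, for every `k ∈ ℕ ∪ {2^∞}` there is a continuous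
`f : [0,1] → [0,1]` with `Per(f) = Sh(k)`. -/
theorem sharkovsky :
    (∀ f : ℝ → ℝ, ContinuousOn f (Set.Icc 0 1) →
        MapsTo f (Set.Icc (0 : ℝ) 1) (Set.Icc (0 : ℝ) 1) →
        ∀ m n : ℕ, SharkGT m n → m ∈ PerSet f → n ∈ PerSet f) ∧
    (∀ f : ℝ → ℝ, ContinuousOn f (Set.Icc 0 1) →
        MapsTo f (Set.Icc (0 : ℝ) 1) (Set.Icc (0 : ℝ) 1) →
        ∃ k : Option ℕ, (∀ j : ℕ, k = some j → 0 < j) ∧ PerSet f = ShSet k) ∧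
    (∀ k : Option ℕ, (∀ j : ℕ, k = some j → 0 < j) →
        ∃ f : ℝ → ℝ, ContinuousOn f (Set.Icc 0 1) ∧
          MapsTo f (Set.Icc (0 : ℝ) 1) (Set.Icc (0 : ℝ) 1) ∧ PerSet f = ShSet k) := by
  refine ⟨fun f hf hm m n h hp => shark_one hf hm h hp, fun f hf hm => ?_, fun k hk => ?_⟩
  · exact shark_two (fun n hn => hn.1) (one_mem hf hm) fun m n h hp => shark_one hf hm h hp
  · cases k with
    | none =>
      obtain ⟨h, hh, he⟩ := shark_three_inf
      exact ⟨trunc h, (trunc_cont h).continuousOn, trunc_maps hh, he⟩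
    | some m =>
      have hm := hk m rfl
      obtain ⟨h, hh⟩ := topSet_least hm
      exact ⟨trunc h, (trunc_cont h).continuousOn, trunc_maps hh.1.1, shark_three_nat hm hh⟩

end
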